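/- arXiv:1406.3803 — 3 statements merged into one kernel-verified Lean document; each statement's English description precedes it below -/
import Mathlib

section
/- The two integer matrices A = [[2, 0], [0, 1]] and B = [[2, 1], [0, 1]] generate a free subsemigroup of the multiplicative semigroup of 2×2 integer matrices: the unique semigroup homomorphism from the free semigroup on a two-element alphabet sending the two generators to A and B respectively is injective. -/
/-!
Every word maps to a matrix `[[p, q], [0, 1]]` with `p ≥ 2`. Multiplying such a matrix on the left
by `A` or `B` gives top row `(2p, 2q)` or `(2p, 2q + 1)` respectively. Hence the parity of the
upper right entry reveals the first letter of the word, the remaining entries determine the image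
of the rest of the word, and a one-letter word is recognised by `p = 2` (longer words have
`p ≥ 4`). Injectivity follows by induction on the word.
-/

/-- The homomorphism from words in the letters `false`, `true` sending them to
`A = [[2, 0], [0, 1]]` and `B = [[2, 1], [0, 1]]`. -/
def wordMatrix : FreeSemigroup Bool →ₙ* Matrix (Fin 2) (Fin 2) ℤ :=
  FreeSemigroup.lift fun b : Bool =>
    if b then (!![2, 1; 0, 1] : Matrix (Fin 2) (Fin 2) ℤ) else !![2, 0; 0, 1]

theorem wordMatrix_of (b : Bool) :
    wordMatrix (FreeSemigroup.of b) = !![2, if b then 1 else 0; 0, 1] := by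
  cases b <;> simp [wordMatrix]

theorem wordMatrix_of_mul (b : Bool) {w : FreeSemigroup Bool} {p q : ℤ}
    (h : wordMatrix w = !![p, q; 0, 1]) :
    wordMatrix (FreeSemigroup.of b * w) = !![2 * p, 2 * q + if b then 1 else 0; 0, 1] := by
  rw [map_mul, wordMatrix_of, h]
  cases b <;> simp

theorem exists_wordMatrix_eq (w : FreeSemigroup Bool) :
    ∃ p q : ℤ, 2 ≤ p ∧ wordMatrix w = !![p, q; 0, 1] := by
  induction w using FreeSemigroup.recOnMul with
  | ih1 b => exact ⟨2, _, le_rfl, wordMatrix_of b⟩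
  | ih2 b w _ ih =>
    obtain ⟨p, q, hp, h⟩ := ih
    exact ⟨2 * p, _, by lia, wordMatrix_of_mul b h⟩

theorem wordMatrix_injective : Function.Injective wordMatrix := by
  intro x
  induction x using FreeSemigroup.recOnMul with
  | ih1 b =>
    intro y hxy
    induction y using FreeSemigroup.recOnMul with
    | ih1 c =>
      rw [wordMatrix_of, wordMatrix_of] at hxy
      cases b <;> cases c <;> simp_all
    | ih2 c w _ _ =>
      obtain ⟨p, q, hp, h⟩ := exists_wordMatrix_eq w
      rw [wordMatrix_of_mul _ h, wordMatrix_of] at hxy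
      have h00 := congrFun₂ hxy 0 0
      simp at h00
      lia
  | ih2 b v _ ih =>
    intro y hxy
    obtain ⟨p, q, hp, h⟩ := exists_wordMatrix_eq v
    induction y using FreeSemigroup.recOnMul with
    | ih1 c =>
      rw [wordMatrix_of_mul _ h, wordMatrix_of] at hxy
      have h00 := congrFun₂ hxy 0 0
      simp at h00
      lia
    | ih2 c w _ _ =>
      obtain ⟨p₂, q₂, hp₂, h₂⟩ := exists_wordMatrix_eq w
      rw [wordMatrix_of_mul b h, wordMatrix_of_mul c h₂] at hxy
      have h00 := congrFun₂ hxy 0 0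
      have h01 := congrFun₂ hxy 0 1
      simp at h00 h01
      -- The two upper right entries have the same parity, so the first letters agree.
      have hbc : b = c := by cases b <;> cases c <;> simp at h01 ⊢ <;> lia
      subst hbc
      have hq : q = q₂ := by lia
      rw [ih (h.trans (by rw [h₂, h00, hq]))]

/-- The matrices `A = [[2,0],[0,1]]` and `B = [[2,1],[0,1]]` generate a free subsemigroup
of the multiplicative semigroup of `2 × 2` integer matrices: the semigroup homomorphism
from the free semigroup on a two-element alphabet sending the generators to `A` and `B`
is injective. -/
theorem free_subsemigroup_of_T2Z :
    Function.Injective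
      ⇑(FreeSemigroup.lift fun b : Bool =>
        if b then (!![2, 1; 0, 1] : Matrix (Fin 2) (Fin 2) ℤ) else !![2, 0; 0, 1]) :=
  wordMatrix_injective
end

section
/- The semigroup T₂(ℤ) of all upper triangular integer 2×2 matrices satisfies only trivial semigroup identities: if u and v are elements of the free semigroup on ℕ such that φ(u) = φ(v) for every semigroup homomorphism φ from the free semigroup on ℕ to the multiplicative semigroup of upper triangular integer 2×2 matrices, then u = v. -/
/-!
Fix `B ≥ 2` larger than every letter of `u` and `v`, and send the letter `n` to the upper triangular
matrix `!![B, n; 0, 1]`. A word `a₁ ⋯ aₖ` is then sent to `!![B ^ k, a₁ + a₂ B + ⋯ + aₖ B ^ (k-1); 0, 1]`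
(`letterMatrix_lift`): the corner entry determines the length of the word, and the off-diagonal entry
is the number whose base-`B` digits are its letters. Digit expansions of a given length are unique,
so this one homomorphism already separates `u` from `v`.
-/

/-- `T₂(ℤ)`: the subsemigroup of the multiplicative semigroup of `2 × 2` integer matrices
consisting of all upper triangular matrices. -/
def T2Z : Subsemigroup (Matrix (Fin 2) (Fin 2) ℤ) where
  carrier := {A | A 1 0 = 0}
  mul_mem' := by
    intro A B hA hB
    have hA' : A 1 0 = 0 := hA
    have hB' : B 1 0 = 0 := hB
    show (A * B) 1 0 = 0
    rw [Matrix.mul_apply, Fin.sum_univ_two, hA', hB']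
    ring

/-- The upper triangular matrix `!![B, n; 0, 1]`, i.e. the affine map `t ↦ B t + n`, as an element
of `T₂(ℤ)`. -/
def letterMatrix (B n : ℕ) : T2Z :=
  ⟨!![(B : ℤ), (n : ℤ); 0, 1], by
    show (!![(B : ℤ), (n : ℤ); 0, 1] : Matrix (Fin 2) (Fin 2) ℤ) 1 0 = 0
    simp⟩

/-- The letters of a word over `ℕ`, as a nonempty list. -/
def letters (w : FreeSemigroup ℕ) : List ℕ := w.head :: w.tail

lemma letters_mul (x y : FreeSemigroup ℕ) : letters (x * y) = letters x ++ letters y := rfl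

lemma letterMatrix_lift (B : ℕ) (w : FreeSemigroup ℕ) :
    (FreeSemigroup.lift (letterMatrix B) w : Matrix (Fin 2) (Fin 2) ℤ) =
      !![((B ^ (letters w).length : ℕ) : ℤ), ((Nat.ofDigits B (letters w) : ℕ) : ℤ); 0, 1] := by
  induction w using FreeSemigroup.recOnMul with
  | ih1 a =>
    rw [FreeSemigroup.lift_of]
    simp [letterMatrix, letters, FreeSemigroup.of]
  | ih2 a w iha ihw =>
    rw [map_mul, MulMemClass.coe_mul, iha, ihw, letters_mul, Nat.ofDigits_append,
      List.length_append]
    simp [pow_add, add_comm (Nat.cast (Nat.ofDigits _ _) : ℤ), mul_comm]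

/-- `T₂(ℤ)` satisfies only trivial semigroup identities: if every semigroup homomorphism
from the free semigroup on `ℕ` to `T₂(ℤ)` equalizes the words `u` and `v`, then `u = v`. -/
theorem T2Z_satisfies_only_trivial_identities
    (u v : FreeSemigroup ℕ)
    (h : ∀ φ : FreeSemigroup ℕ →ₙ* ↥T2Z, φ u = φ v) :
    u = v := by
  -- `B` exceeds `1` and every letter of either word.
  let B := (letters u ++ letters v).sum + 2
  have hB : ∀ l ∈ letters u ++ letters v, l < B := fun l hl => by
    have := List.le_sum_of_mem hl
    omega
  have hM := congrArg (Subtype.val) (h (FreeSemigroup.lift (letterMatrix B)))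
  rw [letterMatrix_lift, letterMatrix_lift] at hM
  have h00 : B ^ (letters u).length = B ^ (letters v).length := by
    exact Int.ofNat_inj.mp (congrFun (congrFun hM 0) 0)
  have h01 : Nat.ofDigits B (letters u) = Nat.ofDigits B (letters v) := by
    exact Int.ofNat_inj.mp (congrFun (congrFun hM 0) 1)
  have hlen := Nat.pow_right_injective (show 2 ≤ B by omega) h00
  have hl : letters u = letters v :=
    Nat.ofDigits_inj_of_len_eq (show 1 < B by omega) hlen
      (fun l hl => hB l (List.mem_append_left _ hl))
      (fun l hl => hB l (List.mem_append_right _ hl)) h01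
  have ⟨hh, ht⟩ := List.cons.inj hl
  exact FreeSemigroup.ext hh ht
end

section
/- Let ζ be the upper triangular integer 3×3 matrix with rows (2, 0, 0), (0, 1, 1), (0, 0, 2), and let ζ^D be its skew transpose, the matrix with rows (2, 1, 0), (0, 1, 0), (0, 0, 2). Then ζ and ζ^D generate a free subsemigroup of the multiplicative semigroup of 3×3 integer matrices: the unique semigroup homomorphism from the free semigroup on a two-element alphabet sending the two generators to ζ and ζ^D respectively is injective. -/
/-! Let `M` be the product of a word of length `n` in the two matrices. Its upper left `2 × 2` block
is `(2 ^ n, x; 0, 1)`, and prepending a letter `b ∈ {0, 1}` (with `b = 1` for `ζᴰ`) turns `x` into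
`2 * x + b`. So `x` is the number whose binary digits spell the word and `2 ^ n` records its length;
together they determine the word. `zetaProd_cons` is the recursion, and `zetaProd_injective` reads
off the letters by the parity of `x`. -/

/-- The letter matrices: `ζᴰ` for `true` and `ζ` for `false`. -/
abbrev zetaLetter (b : Bool) : Matrix (Fin 3) (Fin 3) ℤ :=
  if b then !![2, 1, 0; 0, 1, 0; 0, 0, 2] else !![2, 0, 0; 0, 1, 1; 0, 0, 2]

/-- The product of the matrices of a (possibly empty) word. -/
def zetaProd (l : List Bool) : Matrix (Fin 3) (Fin 3) ℤ := (l.map zetaLetter).prod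

theorem lift_zetaLetter (w : FreeSemigroup Bool) :
    FreeSemigroup.lift zetaLetter w = zetaProd (w.head :: w.tail) := by
  induction w using FreeSemigroup.recOnMul with
  | ih1 b => simp [zetaProd]
  | ih2 b w hb hw =>
    rw [map_mul, hb, hw]
    simp [zetaProd]

theorem zetaProd_second_row (l : List Bool) : zetaProd l 1 0 = 0 ∧ zetaProd l 1 1 = 1 := by
  induction l with
  | nil => simp [zetaProd]
  | cons b l ih =>
    have hrow : zetaProd l 2 0 = 0 ∧ zetaProd l 2 1 = 0 := by
      clear ih
      induction l with
      | nil => simp [zetaProd]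
      | cons c l ih =>
        simp only [zetaProd, List.map_cons, List.prod_cons, Matrix.mul_apply,
          Fin.sum_univ_three] at ih ⊢
        cases c <;> simp [zetaLetter, ih]
    simp only [zetaProd, List.map_cons, List.prod_cons, Matrix.mul_apply,
      Fin.sum_univ_three] at ih hrow ⊢
    cases b <;> simp [zetaLetter, ih, hrow]

theorem zetaProd_cons (b : Bool) (l : List Bool) :
    zetaProd (b :: l) 0 0 = 2 * zetaProd l 0 0 ∧
      zetaProd (b :: l) 0 1 = 2 * zetaProd l 0 1 + if b then 1 else 0 := by
  have h := zetaProd_second_row l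
  simp only [zetaProd, List.map_cons, List.prod_cons, Matrix.mul_apply,
    Fin.sum_univ_three] at h ⊢
  cases b <;> simp [zetaLetter, h]

/-- A word is determined by the first two entries of the first row of its product. -/
theorem zetaProd_injective {l m : List Bool} (h0 : zetaProd l 0 0 = zetaProd m 0 0)
    (h1 : zetaProd l 0 1 = zetaProd m 0 1) : l = m := by
  have hnil : zetaProd [] 0 0 = 1 := by simp [zetaProd]
  induction l generalizing m with
  | nil =>
    cases m with
    | nil => rfl
    | cons c m =>
      -- the corner entry is `1` for the empty word and even otherwise
      have := (zetaProd_cons c m).1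
      omega
  | cons b l ih =>
    have hb := zetaProd_cons b l
    cases m with
    | nil => omega
    | cons c m =>
      have hc := zetaProd_cons c m
      have hbc : b = c := by
        cases b <;> cases c <;> simp at hb hc ⊢ <;> omega
      subst hbc
      rw [ih (m := m) (by omega) (by omega)]


/-- The matrix `ζ` with rows `(2,0,0)`, `(0,1,1)`, `(0,0,2)` and its skew transpose `ζᴰ`
with rows `(2,1,0)`, `(0,1,0)`, `(0,0,2)` generate a free subsemigroup of the
multiplicative semigroup of `3 × 3` integer matrices: the semigroup homomorphism from the
free semigroup on a two-element alphabet sending the generators to `ζ` and `ζᴰ` is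
injective. -/
theorem free_subsemigroup_zeta_zetaD :
    Function.Injective
      ⇑(FreeSemigroup.lift fun b : Bool =>
        if b then (!![2, 1, 0; 0, 1, 0; 0, 0, 2] : Matrix (Fin 3) (Fin 3) ℤ)
        else !![2, 0, 0; 0, 1, 1; 0, 0, 2]) := by
  intro v w h
  have h' : zetaProd (v.head :: v.tail) = zetaProd (w.head :: w.tail) := by
    rw [← lift_zetaLetter, ← lift_zetaLetter]
    exact h
  have hl := zetaProd_injective (congrFun (congrFun h' 0) 0) (congrFun (congrFun h' 0) 1)
  rw [List.cons.injEq] at hl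
  exact FreeSemigroup.ext hl.1 hl.2
end
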